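/- (Bellman decomposition at entry states, key step in the proof of Theorem 1.) Let M be a hierarchical MDP with target states T, σ̂ = ⊔_𝕀 σ_i the union of fixed locally optimal subpolicies, and σ' any memoryless policy of M[σ̂]. Then for every nontrivial partition index i with entry state s: ER_{M[σ̂][σ']}(s → ◊T) = maxER_{M_i}(◊{⊥}) + Σ_{s' ∈ succ_i} Pr_{M_i[σ_i]}(◊{s'}) · ER_{M[σ̂][σ']}(s' → ◊T). -/

import Mathlib

/-!
The chain of `M[σ̂][σ']` and the chain of `M_i[σ_i]` have the same transitions out of the states of
`S_i`, because `σ'` is forced to follow `σ_i` there. Writing `V` for the expected reward in the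
former chain, `E` for the expected reward in the latter, and `R_j` for the probability of reaching
the `j`-th successor state in the latter, all three satisfy one-step (Bellman) equations. Hence
`D = V - E - ∑_j R_j V(suc j)` is harmonic on `S_i` and vanishes on the states that can be entered
when leaving `S_i`.

Two facts about a finite stochastic chain that reaches `T` almost surely carry the proof. The
probability `surv n s` of not having hit `T` before time `n` tends to `0`, so a function that
vanishes on `T` and is dominated by its one-step average off `T` is zero
(`eq_zero_of_harmonic`). This gives `D = 0` on `S_i`. It also makes `1 - Q` injective, hence
surjective by finite dimension, where `Q` is the one-step average killed on `T`; a solution of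
`g = r + Q g` lies within `C * surv n` of the `n`-step truncation of the expected reward, so the
expected reward is finite and equals `g` (`expRew_bellman`).
-/

open scoped BigOperators
open scoped Classical

/-- A (finite) Markov decision process: states `S`, actions `A`, an initial state,
transition probabilities, state rewards, and a set of target states. -/
structure MDP (S A : Type) [Fintype S] [Fintype A] where
  init : S
  P : S → A → S → ℝ
  r : S → ℝ
  target : Set S

namespace MDP

variable {S A : Type} [Fintype S] [Fintype A]

/-- Well-formedness of an MDP: transition probabilities are nonnegative, every
action row sums to `0` or `1`, and rewards are nonnegative. -/
def IsMDP (M : MDP S A) : Prop :=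
  (∀ s a t, 0 ≤ M.P s a t) ∧
  (∀ s a, (∑ t, M.P s a t) = 0 ∨ (∑ t, M.P s a t) = 1) ∧
  (∀ s, 0 ≤ M.r s)

/-- Probability that the Markov chain with kernel `step`, started in `s`,
first visits the set `T` at time `n`. -/
noncomputable def hitAt (step : S → S → ℝ) (T : Set S) : ℕ → S → ℝ
  | 0, s => if s ∈ T then 1 else 0
  | n + 1, s => if s ∈ T then 0 else ∑ t, step s t * hitAt step T n t

/-- Probability of eventually reaching `T` from `s` in the Markov chain `step`. -/
noncomputable def reach (step : S → S → ℝ) (T : Set S) (s : S) : ℝ :=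
  ∑' n, hitAt step T n s

/-- `n`-step truncation of the expected reward accumulated strictly before reaching `T`. -/
noncomputable def erN (step : S → S → ℝ) (rew : S → ℝ) (T : Set S) : ℕ → S → ℝ
  | 0, _ => 0
  | n + 1, s => if s ∈ T then 0 else rew s + ∑ t, step s t * erN step rew T n t

/-- Expected reward accumulated until reaching `T` (supremum of the truncations). -/
noncomputable def expRew (step : S → S → ℝ) (rew : S → ℝ) (T : Set S) (s : S) : ℝ :=
  ⨆ n, erN step rew T n s

/-- The kernel of the Markov chain induced by a memoryless policy `σ`. -/
def stepOf (M : MDP S A) (σ : S → A) : S → S → ℝ := fun s t => M.P s (σ s) t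

/-- A memoryless policy selects an enabled action in every state. -/
def IsPolicy (M : MDP S A) (σ : S → A) : Prop := ∀ s, (∑ t, M.P s (σ s) t) ≠ 0

/-- `Pr_{M[σ]}(s → ◊U)`. -/
noncomputable def PrR (M : MDP S A) (σ : S → A) (U : Set S) (s : S) : ℝ :=
  reach (M.stepOf σ) U s

/-- `ER_{M[σ]}(s → ◊T)` where `T` is the target set of `M`. -/
noncomputable def ER (M : MDP S A) (σ : S → A) (s : S) : ℝ :=
  expRew (M.stepOf σ) M.r M.target s

/-- `maxER_M(s → ◊T)`: the maximal expected reward over memoryless policies. -/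
noncomputable def maxER (M : MDP S A) (s : S) : ℝ :=
  ⨆ σ : { σ : S → A // M.IsPolicy σ }, M.ER σ.1 s

/-- `maxER_M(◊T)` from the initial state. -/
noncomputable def value (M : MDP S A) : ℝ := M.maxER M.init

/-- `M[τ]` for a partial policy `τ : S ⇸ A`: where `τ` is defined, only the chosen
action remains enabled; elsewhere `M` is unchanged. -/
noncomputable def restrict (M : MDP S A) (τ : S → Option A) : MDP S A :=
  { M with
    P := fun s a t =>
      match τ s with
      | some b => if a = b then M.P s a t else 0
      | none => M.P s a t }

end MDP
/-- A hierarchical MDP: an MDP together with (pairwise disjoint, nontrivial)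
partitions `part i`, their entry states, and an enumeration `suc i` of the
(at most `Y`) successor states of each partition.  States outside every
`part i` are the trivial partitions. -/
structure HMDP (S A ι : Type) (Y : ℕ) [Fintype S] [Fintype A] [Fintype ι]
    extends MDP S A where
  part : ι → Finset S
  entry : ι → S
  suc : ι → Fin Y → S

namespace HMDP

variable {S A ι : Type} {Y : ℕ} [Fintype S] [Fintype A] [Fintype ι]

/-- The successor states `succ(S_i) \ S_i` of partition `i`. -/
def succSet (H : HMDP S A ι Y) (i : ι) : Set S :=
  { t | t ∉ H.part i ∧ ∃ s ∈ H.part i, ∃ a, H.P s a t ≠ 0 }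

/-- The hierarchical-MDP conditions: the partitions are pairwise disjoint and
nontrivial; `entry i` belongs to `part i` and is the initial state or has a
predecessor outside `part i`; every other state of `part i` is not the initial
state and has all its predecessors inside `part i`; `suc i` injectively
enumerates (a superset of) the successor states of `part i`, all of them lying
outside `part i`; and target states are trivial states. -/
def IsHMDP (H : HMDP S A ι Y) : Prop :=
  (∀ i j, i ≠ j → Disjoint (H.part i) (H.part j)) ∧
  (∀ i, 2 ≤ (H.part i).card) ∧
  (∀ i, H.entry i ∈ H.part i) ∧
  (∀ i, H.entry i = H.init ∨ ∃ s a, s ∉ H.part i ∧ H.P s a (H.entry i) ≠ 0) ∧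
  (∀ i, ∀ s ∈ H.part i, s ≠ H.entry i →
    s ≠ H.init ∧ ∀ s' a, H.P s' a s ≠ 0 → s' ∈ H.part i) ∧
  (∀ i, Function.Injective (H.suc i) ∧ (∀ j, H.suc i j ∉ H.part i) ∧
    ∀ t ∈ H.succSet i, ∃ j, H.suc i j = t) ∧
  (∀ i, ∀ s ∈ H.part i, s ∉ H.target)

/-- The subMDP `M_i` of partition `i`: its states are the states of `H` plus a
fresh bottom state `none`; inside `part i` the original transitions and rewards
are kept, every state outside `part i` moves with probability 1 to the
(absorbing) bottom state via the fresh action `none` and has reward `0`;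
the target is the bottom state. -/
noncomputable def subMDP (H : HMDP S A ι Y) (i : ι) : MDP (Option S) (Option A) where
  init := some (H.entry i)
  P := fun s a t =>
    match s, a, t with
    | some s, some a, some t => if s ∈ H.part i then H.P s a t else 0
    | some s, none, none => if s ∈ H.part i then 0 else 1
    | none, none, none => 1
    | _, _, _ => 0
  r := fun s =>
    match s with
    | some s => if s ∈ H.part i then H.r s else 0
    | none => 0
  target := {none}

/-- `res_i(j)` for `j < Y`: the probability, under the policy `σs i` of the
subMDP `M_i`, of reaching the `j`-th successor state of partition `i`. -/
noncomputable def resP (H : HMDP S A ι Y) (σs : ι → Option S → Option A)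
    (i : ι) (j : Fin Y) : ℝ :=
  (H.subMDP i).PrR (σs i) {some (H.suc i j)} (some (H.entry i))

/-- `res_i(Y) = maxER_{M_i}(◊{⊥})`. -/
noncomputable def resE (H : HMDP S A ι Y) (i : ι) : ℝ :=
  (H.subMDP i).maxER (some (H.entry i))

/-- The result vector `res_i ∈ ℝ^{Y+1}` of subMDP `M_i` (Def. 7). -/
noncomputable def res (H : HMDP S A ι Y) (σs : ι → Option S → Option A) (i : ι) :
    Fin (Y + 1) → ℝ :=
  fun j => if h : (j : ℕ) < Y then H.resP σs i ⟨j, h⟩ else H.resE i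

/-- The family `σs` consists of (locally) optimal policies of the subMDPs. -/
def LocallyOptimal (H : HMDP S A ι Y) (σs : ι → Option S → Option A) : Prop :=
  ∀ i, (H.subMDP i).IsPolicy (σs i) ∧
    (H.subMDP i).ER (σs i) (some (H.entry i)) = (H.subMDP i).maxER (some (H.entry i))

/-- The partial policy `⊔_𝕀 σ_i` on `H` induced by subMDP policies `σs`. -/
noncomputable def liftPolicy (H : HMDP S A ι Y) (σs : ι → Option S → Option A) :
    S → Option A :=
  fun s => if h : ∃ i, s ∈ H.part i then σs h.choose (some s) else none

/-- `H` has optimal local subpolicies: applying any family of locally optimal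
subMDP policies as a partial policy preserves the maximal expected reward. -/
def HasOptimalLocalSubpolicies (H : HMDP S A ι Y) : Prop :=
  ∀ σs, H.LocallyOptimal σs →
    (H.toMDP.restrict (H.liftPolicy σs)).maxER H.init = H.toMDP.maxER H.init

/-- The macro-MDP of `H` (Def. 6), induced by fixed optimal subMDP policies `σs`:
at states of nontrivial partitions the transition probabilities are the subMDP
reachability probabilities of the successor states and the reward is the
maximal expected subMDP reward; trivial states keep their transitions and
rewards.  (Non-entry states of nontrivial partitions are unreachable.) -/
noncomputable def macroMDP (H : HMDP S A ι Y) (σs : ι → Option S → Option A) :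
    MDP S A where
  init := H.init
  P := fun s a t =>
    if h : ∃ i, s ∈ H.part i then
      ∑ j, if t = H.suc h.choose j then H.resP σs h.choose j else 0
    else H.P s a t
  r := fun s => if h : ∃ i, s ∈ H.part i then H.resE h.choose else H.r s
  target := H.target

end HMDP

namespace HMDPProof

/-! ### Finite chains that reach a target almost surely -/

section chain

variable {X : Type} [Fintype X] {k : X → X → ℝ} {T : Set X}

/-- The probability that the chain `k` started in `s` visits `T` at no time before `n`. -/
noncomputable def surv (k : X → X → ℝ) (T : Set X) (n : ℕ) (s : X) : ℝ :=
  1 - ∑ m ∈ Finset.range n, MDP.hitAt k T m s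

theorem sum_hitAt_of_mem (n : ℕ) {s : X} (h : s ∈ T) :
    ∑ m ∈ Finset.range (n + 1), MDP.hitAt k T m s = 1 := by
  rw [Finset.sum_range_succ']
  simp [MDP.hitAt, h]

theorem sum_hitAt_of_notMem (n : ℕ) {s : X} (h : s ∉ T) :
    ∑ m ∈ Finset.range (n + 1), MDP.hitAt k T m s =
      ∑ t, k s t * ∑ m ∈ Finset.range n, MDP.hitAt k T m t := by
  rw [Finset.sum_range_succ']
  simp only [MDP.hitAt, h, if_false, add_zero, Finset.mul_sum]
  exact Finset.sum_comm

theorem surv_succ_of_notMem (hk1 : ∀ s, ∑ t, k s t = 1) (n : ℕ) {s : X} (h : s ∉ T) :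
    surv k T (n + 1) s = ∑ t, k s t * surv k T n t := by
  simp only [surv]
  rw [sum_hitAt_of_notMem n h]
  simp only [mul_sub, mul_one, Finset.sum_sub_distrib, hk1]

theorem hitAt_nonneg (hk0 : ∀ s t, 0 ≤ k s t) (n : ℕ) (s : X) : 0 ≤ MDP.hitAt k T n s := by
  induction n generalizing s with
  | zero => simp only [MDP.hitAt]; split_ifs <;> simp
  | succ n ih =>
    simp only [MDP.hitAt]
    split_ifs
    · exact le_rfl
    · exact Finset.sum_nonneg fun t _ => mul_nonneg (hk0 s t) (ih t)

theorem surv_nonneg (hk0 : ∀ s t, 0 ≤ k s t) (hk1 : ∀ s, ∑ t, k s t = 1) (n : ℕ) (s : X) :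
    0 ≤ surv k T n s := by
  induction n generalizing s with
  | zero => simp [surv]
  | succ n ih =>
    by_cases h : s ∈ T
    · simp only [surv]
      rw [sum_hitAt_of_mem n h]
      simp
    · rw [surv_succ_of_notMem hk1 n h]
      exact Finset.sum_nonneg fun t _ => mul_nonneg (hk0 s t) (ih t)

theorem summable_hitAt (hk0 : ∀ s t, 0 ≤ k s t) (hk1 : ∀ s, ∑ t, k s t = 1) (s : X) :
    Summable fun n => MDP.hitAt k T n s :=
  summable_of_sum_range_le (c := 1) (fun n => hitAt_nonneg hk0 n s) fun n => by
    have := surv_nonneg (T := T) hk0 hk1 n s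
    simp only [surv] at this
    linarith

theorem reach_of_mem {s : X} (h : s ∈ T) : MDP.reach k T s = 1 := by
  unfold MDP.reach
  rw [tsum_eq_single 0]
  · simp [MDP.hitAt, h]
  · rintro (_ | n) hn
    · exact absurd rfl hn
    · simp [MDP.hitAt, h]

theorem reach_of_notMem (hk0 : ∀ s t, 0 ≤ k s t) (hk1 : ∀ s, ∑ t, k s t = 1)
    {s : X} (h : s ∉ T) : MDP.reach k T s = ∑ t, k s t * MDP.reach k T t := by
  unfold MDP.reach
  rw [(summable_hitAt hk0 hk1 s).tsum_eq_zero_add]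
  simp only [MDP.hitAt, h, if_false, zero_add]
  rw [Summable.tsum_finsetSum fun t _ => (summable_hitAt hk0 hk1 t).mul_left _]
  simp only [tsum_mul_left]

theorem tendsto_surv (hk0 : ∀ s t, 0 ≤ k s t) (hk1 : ∀ s, ∑ t, k s t = 1)
    (hr : ∀ s, MDP.reach k T s = 1) (s : X) :
    Filter.Tendsto (fun n => surv k T n s) Filter.atTop (nhds 0) := by
  have h := (summable_hitAt (T := T) hk0 hk1 s).hasSum.tendsto_sum_nat
  have h1 : ∑' n, MDP.hitAt k T n s = 1 := hr s
  rw [h1] at h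
  simpa [surv] using h.const_sub 1

/-- Iterating the domination `|f| ≤ Q |f|` bounds `|f|` by the survival probability. -/
theorem abs_le_surv (hk0 : ∀ s t, 0 ≤ k s t) (hk1 : ∀ s, ∑ t, k s t = 1)
    {C : ℝ} (hC : 0 ≤ C) {f : ℕ → X → ℝ} (h0 : ∀ s, |f 0 s| ≤ C)
    (hT : ∀ n, ∀ s ∈ T, f (n + 1) s = 0)
    (hf : ∀ n, ∀ s ∉ T, |f (n + 1) s| ≤ ∑ t, k s t * |f n t|) (n : ℕ) (s : X) :
    |f n s| ≤ C * surv k T n s := by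
  induction n generalizing s with
  | zero => simpa [surv] using h0 s
  | succ n ih =>
    by_cases h : s ∈ T
    · rw [hT n s h, abs_zero]
      exact mul_nonneg hC (surv_nonneg hk0 hk1 _ _)
    · rw [surv_succ_of_notMem hk1 n h, Finset.mul_sum]
      refine (hf n s h).trans (Finset.sum_le_sum fun t _ => ?_)
      rw [mul_left_comm]
      exact mul_le_mul_of_nonneg_left (ih t) (hk0 s t)

theorem abs_le_sum_abs (f : X → ℝ) (s : X) : |f s| ≤ ∑ t, |f t| :=
  Finset.single_le_sum (f := fun t => |f t|) (fun t _ => abs_nonneg (f t)) (Finset.mem_univ s)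

theorem eq_zero_of_harmonic (hk0 : ∀ s t, 0 ≤ k s t) (hk1 : ∀ s, ∑ t, k s t = 1)
    (hr : ∀ s, MDP.reach k T s = 1) {f : X → ℝ} (hT : ∀ s ∈ T, f s = 0)
    (hf : ∀ s ∉ T, |f s| ≤ ∑ t, k s t * |f t|) (s : X) : f s = 0 := by
  have hb := abs_le_surv (T := T) hk0 hk1 (Finset.sum_nonneg fun t _ => abs_nonneg (f t))
    (f := fun _ => f) (abs_le_sum_abs f) (fun _ => hT) (fun _ => hf)
  have hl := (tendsto_surv hk0 hk1 hr s).const_mul (∑ t, |f t|)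
  rw [mul_zero] at hl
  exact abs_nonpos_iff.1 (ge_of_tendsto' hl fun n => hb n s)

theorem abs_sum_le (hk0 : ∀ s t, 0 ≤ k s t) (s : X) (f : X → ℝ) :
    |∑ t, k s t * f t| ≤ ∑ t, k s t * |f t| := by
  refine (Finset.abs_sum_le_sum_abs _ _).trans (le_of_eq (Finset.sum_congr rfl fun t _ => ?_))
  rw [abs_mul, abs_of_nonneg (hk0 s t)]

/-- The one-step averaging operator of the chain `k`, killed on `T`. -/
noncomputable def avg (k : X → X → ℝ) (T : Set X) : (X → ℝ) →ₗ[ℝ] (X → ℝ) where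
  toFun f s := if s ∈ T then 0 else ∑ t, k s t * f t
  map_add' f g := by
    ext s
    by_cases h : s ∈ T <;> simp [h, mul_add, Finset.sum_add_distrib]
  map_smul' c f := by
    ext s
    by_cases h : s ∈ T <;> simp [h, Finset.mul_sum, mul_left_comm]

theorem exists_bellman (hk0 : ∀ s t, 0 ≤ k s t) (hk1 : ∀ s, ∑ t, k s t = 1)
    (hr : ∀ s, MDP.reach k T s = 1) (rew : X → ℝ) :
    ∃ g : X → ℝ, ∀ s, g s = if s ∈ T then 0 else rew s + ∑ t, k s t * g t := by
  have hinj : Function.Injective ((LinearMap.id : (X → ℝ) →ₗ[ℝ] (X → ℝ)) - avg k T) := by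
    rw [← LinearMap.ker_eq_bot, LinearMap.ker_eq_bot']
    intro f hf
    have h : ∀ s, f s = if s ∈ T then 0 else ∑ t, k s t * f t := fun s =>
      sub_eq_zero.1 (congrFun hf s)
    funext s
    refine eq_zero_of_harmonic (T := T) hk0 hk1 hr (fun s hs => ?_) (fun s hs => ?_) s
    · rw [h s, if_pos hs]
    · rw [h s, if_neg hs]
      exact abs_sum_le hk0 s f
  obtain ⟨g, hg⟩ := LinearMap.injective_iff_surjective.1 hinj fun s => if s ∈ T then 0 else rew s
  refine ⟨g, fun s => ?_⟩
  have h : g s - (if s ∈ T then 0 else ∑ t, k s t * g t) = if s ∈ T then 0 else rew s :=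
    congrFun hg s
  split_ifs at h ⊢ <;> linarith

theorem erN_mono (hk0 : ∀ s t, 0 ≤ k s t) {rew : X → ℝ} (hrew : ∀ s, 0 ≤ rew s) (s : X) :
    Monotone fun n => MDP.erN k rew T n s := by
  have hstep : ∀ n s, MDP.erN k rew T n s ≤ MDP.erN k rew T (n + 1) s := by
    intro n
    induction n with
    | zero =>
      intro s
      simp only [MDP.erN]
      split_ifs
      · exact le_rfl
      · simpa using hrew s
    | succ n ih =>
      intro s
      rw [MDP.erN, MDP.erN]
      split_ifs
      · exact le_rfl
      · gcongr with t
        · exact hk0 s t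
        · exact ih t
  exact monotone_nat_of_le_succ fun n => hstep n s

theorem expRew_bellman (hk0 : ∀ s t, 0 ≤ k s t) (hk1 : ∀ s, ∑ t, k s t = 1)
    (hr : ∀ s, MDP.reach k T s = 1) {rew : X → ℝ} (hrew : ∀ s, 0 ≤ rew s) (s : X) :
    MDP.expRew k rew T s =
      if s ∈ T then 0 else rew s + ∑ t, k s t * MDP.expRew k rew T t := by
  obtain ⟨g, hg⟩ := exists_bellman hk0 hk1 hr rew
  have hb := abs_le_surv (T := T) hk0 hk1 (Finset.sum_nonneg fun t _ => abs_nonneg (g t))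
    (f := fun n s => MDP.erN k rew T n s - g s)
    (fun s => by simpa [MDP.erN] using abs_le_sum_abs g s)
    (fun n s hs => by rw [hg s]; simp [MDP.erN, hs])
    (fun n s hs => by
      rw [hg s]
      simp only [MDP.erN, hs, if_false, add_sub_add_left_eq_sub, ← Finset.sum_sub_distrib,
        ← mul_sub]
      exact abs_sum_le hk0 s _)
  have hE : ∀ s, MDP.expRew k rew T s = g s := by
    intro s
    have hl := (tendsto_surv hk0 hk1 hr s).const_mul (∑ t, |g t|)
    rw [mul_zero] at hl
    have ht : Filter.Tendsto (fun n => MDP.erN k rew T n s) Filter.atTop (nhds (g s)) :=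
      tendsto_iff_norm_sub_tendsto_zero.2
        (squeeze_zero (fun n => norm_nonneg _) (fun n => hb n s) hl)
    exact (isLUB_of_tendsto_atTop (erN_mono hk0 hrew s) ht).ciSup_eq
  simp only [hE]
  exact hg s

theorem sum_stepOf {S A : Type} [Fintype S] [Fintype A] {M : MDP S A} (hM : M.IsMDP)
    {σ : S → A} (hσ : M.IsPolicy σ) (s : S) : ∑ t, M.stepOf σ s t = 1 :=
  (hM.2.1 s (σ s)).resolve_left (hσ s)

end chain

/-! ### The subMDP and the induced chain of the hierarchical MDP -/

section hier

variable {S A ι : Type} {Y : ℕ} [Fintype S] [Fintype A] [Fintype ι]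

theorem subMDP_isMDP (H : HMDP S A ι Y) (hM : H.toMDP.IsMDP) (i : ι) : (H.subMDP i).IsMDP := by
  refine ⟨?_, ?_, ?_⟩
  · rintro (_ | s) (_ | a) (_ | t) <;> simp only [HMDP.subMDP] <;> try split_ifs
    all_goals first | exact hM.1 _ _ _ | norm_num
  · rintro (_ | s) (_ | a)
    · right; simp [HMDP.subMDP, Fintype.sum_option]
    · left; simp [HMDP.subMDP]
    · by_cases h : s ∈ H.part i
      · left; simp [HMDP.subMDP, Fintype.sum_option, h]
      · right; simp [HMDP.subMDP, Fintype.sum_option, h]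
    · by_cases h : s ∈ H.part i
      · simpa [HMDP.subMDP, Fintype.sum_option, h] using hM.2.1 s a
      · left; simp [HMDP.subMDP, Fintype.sum_option, h]
  · rintro (_ | s) <;> simp only [HMDP.subMDP]
    · exact le_rfl
    · split_ifs
      · exact hM.2.2 s
      · exact le_rfl

/-- A policy of a subMDP uses the fresh action exactly outside the partition; this determines
its one-step averages. -/
theorem subMDP_step (H : HMDP S A ι Y) (i : ι) {σ : Option S → Option A}
    (hσ : (H.subMDP i).IsPolicy σ) (f : Option S → ℝ) :
    (∀ s ∈ H.part i, ∃ b, σ (some s) = some b ∧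
      ∑ t, (H.subMDP i).stepOf σ (some s) t * f t = ∑ t, H.P s b t * f (some t)) ∧
    (∀ s ∉ H.part i, ∑ t, (H.subMDP i).stepOf σ (some s) t * f t = f none) := by
  constructor
  · intro s hs
    have h := hσ (some s)
    rcases hb : σ (some s) with _ | b
    · simp [hb, HMDP.subMDP, Fintype.sum_option, hs] at h
    · exact ⟨b, rfl, by simp [MDP.stepOf, hb, HMDP.subMDP, Fintype.sum_option, hs]⟩
  · intro s hs
    have h := hσ (some s)
    rcases hb : σ (some s) with _ | b
    · simp [MDP.stepOf, hb, HMDP.subMDP, Fintype.sum_option, hs]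
    · simp [hb, HMDP.subMDP, Fintype.sum_option, hs] at h

theorem subMDP_reach_none (H : HMDP S A ι Y) (i : ι) (σ : Option S → Option A) (x : S) :
    (H.subMDP i).PrR σ {some x} none = 0 := by
  have h : ∀ n, MDP.hitAt ((H.subMDP i).stepOf σ) {some x} n none = 0 := by
    intro n
    induction n with
    | zero => simp [MDP.hitAt]
    | succ n ih =>
      have h0 : ∀ t, (H.subMDP i).stepOf σ none (some t) = 0 := by
        intro t
        rcases hb : σ none with _ | b <;> simp [MDP.stepOf, HMDP.subMDP, hb]
      simp [MDP.hitAt, Fintype.sum_option, ih, h0]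
  simp [MDP.PrR, MDP.reach, h]

theorem liftPolicy_eq (H : HMDP S A ι Y) (hH : H.IsHMDP) (σs : ι → Option S → Option A)
    (i : ι) {s : S} (hs : s ∈ H.part i) : H.liftPolicy σs s = σs i (some s) := by
  have hex : ∃ i, s ∈ H.part i := ⟨i, hs⟩
  have : hex.choose = i := by
    by_contra hne
    exact Finset.disjoint_left.1 (hH.1 _ _ hne) hex.choose_spec hs
  simp only [HMDP.liftPolicy, dif_pos hex, this]

/-- A policy of `M[τ]` selects `τ s` wherever `τ` is defined, and its rows are rows of `M`. -/
theorem restrict_policy {M : MDP S A} {τ : S → Option A} {σ : S → A}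
    (hσ : (M.restrict τ).IsPolicy σ) :
    (∀ s b, τ s = some b → σ s = b) ∧ (M.restrict τ).stepOf σ = M.stepOf σ := by
  have h1 : ∀ s b, τ s = some b → σ s = b := by
    intro s b hb
    by_contra hne
    have h := hσ s
    simp [MDP.restrict, hb, hne] at h
  refine ⟨h1, ?_⟩
  funext s t
  rcases hb : τ s with _ | b
  · simp [MDP.stepOf, MDP.restrict, hb]
  · simp [MDP.stepOf, MDP.restrict, hb, h1 s b hb]

end hier

end HMDPProof

open HMDPProof

/-- **Bellman decomposition at entry states** (key step in the proof of
Theorem 1).  Let `M` be a hierarchical MDP with target states `T`,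
`σ̂ = ⊔_𝕀 σ_i` the union of fixed locally optimal subpolicies, and `σ'` any
memoryless policy of `M[σ̂]`.  Then for every nontrivial partition index `i`
with entry state `s`:
`ER_{M[σ̂][σ']}(s → ◊T) = maxER_{M_i}(◊{⊥}) + Σ_{s' ∈ succ_i} Pr_{M_i[σ_i]}(◊{s'}) · ER_{M[σ̂][σ']}(s' → ◊T)`. -/
theorem bellman_decomposition_at_entry
    {S A ι : Type} {Y : ℕ} [Fintype S] [Fintype A] [Fintype ι]
    (H : HMDP S A ι Y) (hM : H.toMDP.IsMDP) (hH : H.IsHMDP)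
    (hT : ∀ σ, H.toMDP.IsPolicy σ → ∀ s, H.toMDP.PrR σ H.target s = 1)
    (hTsub : ∀ i σ, (H.subMDP i).IsPolicy σ → ∀ s, (H.subMDP i).PrR σ {none} s = 1)
    (σs : ι → Option S → Option A) (hσs : H.LocallyOptimal σs)
    (σ' : S → A) (hσ' : (H.toMDP.restrict (H.liftPolicy σs)).IsPolicy σ')
    (i : ι) :
    (H.toMDP.restrict (H.liftPolicy σs)).ER σ' (H.entry i) =
      (H.subMDP i).maxER (some (H.entry i)) +
        ∑ j, H.resP σs i j *
          (H.toMDP.restrict (H.liftPolicy σs)).ER σ' (H.suc i j) := by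
  obtain ⟨hact, hstep⟩ := restrict_policy hσ'
  have hpol : H.toMDP.IsPolicy σ' := fun s h =>
    hσ' s ((congrArg (fun k => ∑ t, k s t) hstep).trans h)
  have hrow := sum_stepOf hM hpol
  obtain ⟨hσ, hopt⟩ := hσs i
  have hk0 : ∀ s t, 0 ≤ H.toMDP.stepOf σ' s t := fun s t => hM.1 _ _ _
  have hsM := subMDP_isMDP H hM i
  have hK0 : ∀ s t, 0 ≤ (H.subMDP i).stepOf (σs i) s t := fun s t => hsM.1 _ _ _
  have hK1 := sum_stepOf hsM hσ
  have hin : ∀ s ∈ H.part i, ∀ f : Option S → ℝ,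
      ∑ t, (H.subMDP i).stepOf (σs i) (some s) t * f t =
        ∑ t, H.toMDP.stepOf σ' s t * f (some t) := by
    intro s hs f
    obtain ⟨b, hb, h⟩ := (subMDP_step H i hσ f).1 s hs
    rw [h]
    have := hact s b ((liftPolicy_eq H hH σs i hs).trans hb)
    simp only [MDP.stepOf, this]
  have hout : ∀ s ∉ H.part i, ∀ f : Option S → ℝ,
      ∑ t, (H.subMDP i).stepOf (σs i) (some s) t * f t = f none :=
    fun s hs f => (subMDP_step H i hσ f).2 s hs
  set V : S → ℝ := (H.toMDP.restrict (H.liftPolicy σs)).ER σ' with hV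
  have hVb : ∀ s ∈ H.part i, V s = H.r s + ∑ t, H.toMDP.stepOf σ' s t * V t := by
    intro s hs
    have h := expRew_bellman hk0 hrow (hT σ' hpol) hM.2.2 s
    rw [if_neg (hH.2.2.2.2.2.2 i s hs)] at h
    have hVe : V = MDP.expRew (H.toMDP.stepOf σ') H.r H.target := by
      funext s
      simp only [hV, MDP.ER, hstep]
      rfl
    rw [hVe]
    exact h
  set E : Option S → ℝ := (H.subMDP i).ER (σs i) with hE
  have hEb := expRew_bellman hK0 hK1 (hTsub i (σs i) hσ) hsM.2.2
  have hEnone : E none = 0 := (hEb none).trans (if_pos rfl)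
  have hEin : ∀ s ∈ H.part i,
      E (some s) = H.r s + ∑ t, H.toMDP.stepOf σ' s t * E (some t) := by
    intro s hs
    rw [← hin s hs E]
    refine (hEb (some s)).trans ((if_neg (by simp)).trans ?_)
    congr 1
    simp [HMDP.subMDP, hs]
  have hEout : ∀ s ∉ H.part i, E (some s) = 0 := by
    intro s hs
    refine (hEb (some s)).trans ((if_neg (by simp)).trans ?_)
    have h1 : (H.subMDP i).r (some s) = 0 := by simp [HMDP.subMDP, hs]
    rw [h1, zero_add]
    exact (hout s hs E).trans hEnone
  set R : Fin Y → Option S → ℝ := fun j => (H.subMDP i).PrR (σs i) {some (H.suc i j)} with hR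
  have hRin : ∀ j, ∀ s ∈ H.part i,
      R j (some s) = ∑ t, H.toMDP.stepOf σ' s t * R j (some t) := by
    intro j s hs
    rw [← hin s hs (R j)]
    refine reach_of_notMem hK0 hK1 fun h => (hH.2.2.2.2.2.1 i).2.1 j ?_
    rwa [← Option.some_injective _ h]
  have hRout : ∀ j, ∀ s ∉ H.part i, R j (some s) = if s = H.suc i j then 1 else 0 := by
    intro j s hs
    split_ifs with h
    · exact reach_of_mem (by simp [h])
    · refine (reach_of_notMem hK0 hK1 (by simpa using h)).trans ?_
      exact (hout s hs (R j)).trans (subMDP_reach_none H i (σs i) _)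
  set D : S → ℝ := fun s => V s - (E (some s) + ∑ j, R j (some s) * V (H.suc i j)) with hD
  have hDin : ∀ s ∈ H.part i, D s = ∑ t, H.toMDP.stepOf σ' s t * D t := by
    intro s hs
    simp only [hD, mul_sub, mul_add, Finset.sum_sub_distrib, Finset.sum_add_distrib]
    rw [hVb s hs, hEin s hs]
    have h : ∑ j, R j (some s) * V (H.suc i j) =
        ∑ t, H.toMDP.stepOf σ' s t * ∑ j, R j (some t) * V (H.suc i j) := by
      simp only [Finset.mul_sum]
      rw [Finset.sum_comm]
      refine Finset.sum_congr rfl fun j _ => ?_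
      rw [hRin j s hs, Finset.sum_mul]
      exact Finset.sum_congr rfl fun t _ => mul_assoc _ _ _
    rw [h]
    ring
  have hDout : ∀ j, D (H.suc i j) = 0 := by
    intro j
    obtain ⟨hinj, hnot, -⟩ := hH.2.2.2.2.2.1 i
    simp only [hD, hEout _ (hnot j), hRout _ _ (hnot j), hinj.eq_iff]
    simp
  -- The truncation of `D` to the partition is harmonic there, since every state outside the
  -- partition that is entered from it is some `suc i j`.
  have hzero := eq_zero_of_harmonic hk0 hrow (hT σ' hpol)
    (f := fun s => if s ∈ H.part i then D s else 0)
    (fun s hs => if_neg fun h => hH.2.2.2.2.2.2 i s h hs)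
    (fun s _ => by
      by_cases hs : s ∈ H.part i
      · simp only [hs, if_true]
        rw [hDin s hs]
        refine (abs_sum_le hk0 s D).trans (le_of_eq (Finset.sum_congr rfl fun t _ => ?_))
        by_cases ht : t ∈ H.part i
        · simp only [ht, if_true]
        · by_cases hp : H.toMDP.stepOf σ' s t = 0
          · simp only [hp, zero_mul]
          · obtain ⟨j, rfl⟩ := (hH.2.2.2.2.2.1 i).2.2 t ⟨ht, s, hs, σ' s, hp⟩
            simp only [hDout j, ite_self]
      · simp only [hs, if_false, abs_zero]
        exact Finset.sum_nonneg fun t _ => mul_nonneg (hk0 s t) (abs_nonneg _))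
    (H.entry i)
  simp only [hH.2.2.1 i, if_true] at hzero
  rw [← hopt]
  exact sub_eq_zero.1 hzero
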